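/- arXiv:2301.05772 — 3 statements merged into one kernel-verified Lean document; each statement's English description precedes it below -/
import Mathlib

section
/- For every prime p and every integer n ≥ 1, the p-adic valuation of the rational number p^(n-1)/n! is nonnegative. (Hence the power series w(x) = p^{-1}(exp(px) − 1) = Σ_{n≥1} (p^{n-1}/n!) xⁿ lies in ℤ_p[[x]].) -/
/-- For every prime `p` and every `n ≥ 1`, the `p`-adic valuation of `p^(n-1)/n!` is
nonnegative; hence `w(x) = p⁻¹(exp(px) - 1) = Σ_{n≥1} (p^{n-1}/n!) xⁿ` lies in `ℤ_p[[x]]`. -/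
theorem p_adic_integrality_exp_coefficients (p : ℕ) (hp : p.Prime) (n : ℕ) (hn : 1 ≤ n) :
    0 ≤ padicValRat p ((p ^ (n - 1) : ℚ) / (n.factorial : ℚ)) := by
  have : Fact p.Prime := ⟨hp⟩
  have hlt := padicValNat_factorial_lt_of_ne_zero p (Nat.one_le_iff_ne_zero.mp hn)
  have hp0 : (p : ℚ) ≠ 0 := Nat.cast_ne_zero.mpr hp.ne_zero
  rw [padicValRat.div (pow_ne_zero _ hp0) (Nat.cast_ne_zero.mpr n.factorial_ne_zero),
    padicValRat.pow, padicValRat.self hp.one_lt, padicValRat.of_nat]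
  omega
end

section
/- The function x ↦ log|1 − e^x| is locally integrable on ℝ (with respect to Lebesgue measure). Hence li₁(x) = −log|1 − e^x|, which has a logarithmic singularity only at x = 0, defines a distribution on ℝ. -/
/-- `x ↦ log|1 - e^x|` is locally integrable on `ℝ`; hence `li₁(x) = -log|1 - e^x|`,
with a logarithmic singularity only at `x = 0`, defines a distribution on `ℝ`. -/
theorem li_one_locally_integrable :
    MeasureTheory.LocallyIntegrable (fun x : ℝ => Real.log |1 - Real.exp x|)
      MeasureTheory.volume := by
  intro x
  have hf : MeromorphicOn (fun y : ℝ => 1 - Real.exp y) (Set.uIcc (x - 1) (x + 1)) :=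
    fun y _ => (analyticAt_const.sub analyticAt_rexp).meromorphicAt
  have hint := hf.intervalIntegrable_log_norm
  rw [intervalIntegrable_iff_integrableOn_Icc_of_le (by linarith)] at hint
  exact ⟨_, Icc_mem_nhds (by linarith) (by linarith), hint⟩
end

section
/- Stefan–Boltzmann law: for all positive reals h, k, T, the total radiance of Planck's black-body spectrum ρ(ν, T) = 2h ν³/(e^{hν/(kT)} − 1) satisfies ∫₀^∞ 2h ν³/(e^{hν/(kT)} − 1) dν = (2π⁴/15) · k⁴T⁴/h³; in particular the total radiance scales as the fourth power of the temperature T. -/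
open MeasureTheory Set Real

/-- The integral of `t ^ m * exp (-(r * t))` over the positive half-line. -/
lemma integral_pow_mul_exp_neg_mul_Ioi (m : ℕ) {r : ℝ} (hr : 0 < r) :
    ∫ t in Ioi (0 : ℝ), t ^ m * exp (-(r * t)) = m.factorial / r ^ (m + 1) := by
  have key := integral_rpow_mul_exp_neg_mul_Ioi (a := m + 1) (by positivity) hr
  simp only [add_sub_cancel_right, rpow_natCast, Gamma_nat_eq_factorial] at key
  rw [key, ← Nat.cast_succ, rpow_natCast]
  simp [div_eq_inv_mul]

lemma integrableOn_pow_mul_exp_neg_mul_Ioi (m : ℕ) {r : ℝ} (hr : 0 < r) :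
    IntegrableOn (fun t : ℝ ↦ t ^ m * exp (-(r * t))) (Ioi 0) := by
  refine Integrable.of_integral_ne_zero ?_
  rw [integral_pow_mul_exp_neg_mul_Ioi m hr]
  positivity

/-- The Bose–Einstein integrand is a sum of decaying exponentials. -/
lemma hasSum_pow_mul_exp_neg_mul (m : ℕ) {t : ℝ} (ht : 0 < t) :
    HasSum (fun n : ℕ ↦ t ^ m * exp (-((n + 1) * t))) (t ^ m / (exp t - 1)) := by
  have hgeom := (hasSum_geometric_of_lt_one (exp_pos (-t)).le
    (exp_lt_one_iff.mpr (neg_lt_zero.mpr ht))).mul_left (t ^ m * exp (-t))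
  convert! hgeom using 1
  · ext n
    rw [← exp_nat_mul, mul_assoc, ← exp_add]
    ring_nf
  · have h1 : exp t - 1 ≠ 0 := (sub_pos.mpr (one_lt_exp_iff.mpr ht)).ne'
    rw [exp_neg]
    field_simp

/-- The Bose–Einstein integral as a Dirichlet series. -/
lemma hasSum_integral_pow_div_exp_sub_one {m : ℕ} (hm : 1 ≤ m) :
    HasSum (fun n : ℕ ↦ (m.factorial : ℝ) / ((n : ℝ) + 1) ^ (m + 1))
      (∫ t in Ioi (0 : ℝ), t ^ m / (exp t - 1)) := by
  have hint (n : ℕ) := integral_pow_mul_exp_neg_mul_Ioi m (r := n + 1) (by positivity)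
  have hnorm (n : ℕ) : ∫ t in Ioi (0 : ℝ), ‖t ^ m * exp (-((n + 1) * t))‖ =
      m.factorial / ((n : ℝ) + 1) ^ (m + 1) := by
    rw [← hint n]
    refine setIntegral_congr_fun measurableSet_Ioi fun t (ht : 0 < t) ↦ ?_
    exact norm_of_nonneg (by positivity)
  have hsum : Summable fun n : ℕ ↦ (m.factorial : ℝ) / ((n : ℝ) + 1) ^ (m + 1) := by
    have := (summable_nat_add_iff 1).mpr
      (summable_one_div_nat_pow.mpr (show 1 < m + 1 by lia))
    simpa [div_eq_mul_inv] using this.mul_left (m.factorial : ℝ)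
  have key := hasSum_integral_of_summable_integral_norm
    (fun n : ℕ ↦ integrableOn_pow_mul_exp_neg_mul_Ioi m (r := n + 1) (by positivity))
    (by simpa only [hnorm] using hsum)
  simp only [hint] at key
  rwa [setIntegral_congr_fun measurableSet_Ioi fun t ht ↦
    (hasSum_pow_mul_exp_neg_mul m ht).tsum_eq] at key

lemma integral_pow_three_div_exp_sub_one :
    ∫ t in Ioi (0 : ℝ), t ^ 3 / (exp t - 1) = π ^ 4 / 15 := by
  have hzeta : HasSum (fun n : ℕ ↦ 1 / ((n : ℝ) + 1) ^ 4) (π ^ 4 / 90) := by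
    simpa using (hasSum_nat_add_iff' 1).mpr hasSum_zeta_four
  have key := (hasSum_integral_pow_div_exp_sub_one (m := 3) (by norm_num)).unique
    (by simpa [div_eq_mul_inv] using hzeta.mul_left (Nat.factorial 3 : ℝ))
  rw [key]
  norm_num [Nat.factorial]
  ring

/-- **Stefan–Boltzmann law**: for positive `h`, `k`, `T`, the total radiance of Planck's
black-body spectrum `ρ(ν,T) = 2hν³/(e^{hν/(kT)} - 1)` is `(2π⁴/15)·k⁴T⁴/h³`; in particular
it scales as the fourth power of the temperature. -/
theorem stefan_boltzmann (h k T : ℝ) (hh : 0 < h) (hk : 0 < k) (hT : 0 < T) :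
    ∫ ν in Set.Ioi (0 : ℝ), 2 * h * ν ^ 3 / (Real.exp (h * ν / (k * T)) - 1) =
      (2 * Real.pi ^ 4 / 15) * (k ^ 4 * T ^ 4 / h ^ 3) := by
  have hc : 0 < h / (k * T) := by positivity
  have hcomp := integral_comp_mul_left_Ioi (fun t : ℝ ↦ t ^ 3 / (exp t - 1)) 0 hc
  rw [mul_zero, integral_pow_three_div_exp_sub_one, smul_eq_mul] at hcomp
  calc
    _ = ∫ ν in Ioi (0 : ℝ), 2 * h * (k * T / h) ^ 3 *
          ((h / (k * T) * ν) ^ 3 / (exp (h / (k * T) * ν) - 1)) := by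
      congr 1 with ν
      rw [div_mul_eq_mul_div, ← mul_div_assoc]
      congr 1
      field_simp
    _ = _ := by
      rw [integral_const_mul, hcomp]
      field_simp
end
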